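/- arXiv:1310.5921 — 3 statements merged into one kernel-verified Lean document; each statement's English description precedes it below -/
import Mathlib

section
/- For every integer k ≥ 1 and every real number t ≠ 0, the k-th power of the function g(t) = 1/(1 − e^{−t}) satisfies (1/(1 − e^{−t}))^k = ((−1)^{k−1}/(k−1)!) Σ_{m=1}^{k} s(k, m) g^{(m−1)}(t), where g^{(m−1)} denotes the (m−1)-st derivative of g (with g^{(0)} = g). -/
open Real Finset

/-- Signed Stirling numbers of the first kind, real-valued: the coefficient of `x^m` in
`x (x-1) ⋯ (x-k+1)`. -/
noncomputable def s1 (k m : ℕ) : ℝ := (descPochhammer ℝ k).coeff m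

/-! The function `g t = 1 / (1 - exp (-t))` solves the Bernoulli equation `g' = g - g²`. For a
solution of `g' = g + b g²` one has `(gⁿ)' = n gⁿ + n b gⁿ⁺¹`, that is `(D - n) gⁿ = n b gⁿ⁺¹`.
Iterating, `(D - 1) ⋯ (D - n) g = n! bⁿ gⁿ⁺¹`. The Stirling numbers enter because
`X (X - 1) ⋯ (X - n)` is the descending Pochhammer polynomial, so the coefficients of
`(X - 1) ⋯ (X - n)` are the `s(n + 1, m + 1)`. -/

open Polynomial (C X)
open scoped ContDiff Polynomial

section DifferentialOperator

variable {𝕜 F : Type*} [NontriviallyNormedField 𝕜] [NormedAddCommGroup F] [NormedSpace 𝕜 F]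

/-- The value at `x` of `p(D) f`, where `D` is differentiation and `p(D)` is the differential
operator with constant coefficients and symbol `p`. It is bundled as a linear map in `p`, for fixed
`f` and `x`. Derivatives of `f` which do not exist at `x` count as `0`. -/
noncomputable def diffOpAt (f : 𝕜 → F) (x : 𝕜) : 𝕜[X] →ₗ[𝕜] F :=
  Polynomial.lsum fun m ↦ LinearMap.toSpanSingleton 𝕜 F (iteratedDeriv m f x)

theorem diffOpAt_monomial (f : 𝕜 → F) (x : 𝕜) (m : ℕ) (a : 𝕜) :
    diffOpAt f x (Polynomial.monomial m a) = a • iteratedDeriv m f x := by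
  simp [diffOpAt, Polynomial.lsum_apply]

theorem diffOpAt_one (f : 𝕜 → F) (x : 𝕜) : diffOpAt f x 1 = f x := by
  simpa using diffOpAt_monomial f x 0 1

theorem diffOpAt_eq_sum_range (f : 𝕜 → F) (x : 𝕜) {p : 𝕜[X]} {n : ℕ} (hp : p.natDegree < n) :
    diffOpAt f x p = ∑ m ∈ range n, p.coeff m • iteratedDeriv m f x :=
  p.sum_over_range' (by simp) n hp

theorem hasDerivAt_iteratedDeriv {f : 𝕜 → F} {x : 𝕜} {n : WithTop ℕ∞} {m : ℕ}
    (hf : ContDiffAt 𝕜 n f x) (hm : m < n) :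
    HasDerivAt (iteratedDeriv m f) (iteratedDeriv (m + 1) f x) x := by
  rw [iteratedDeriv_succ, hasDerivAt_deriv_iff, iteratedDeriv_eq_equiv_comp,
    LinearIsometryEquiv.comp_differentiableAt_iff]
  exact hf.differentiableAt_iteratedFDeriv hm

theorem hasDerivAt_diffOpAt {f : 𝕜 → F} {x : 𝕜} (hf : ContDiffAt 𝕜 ∞ f x) (p : 𝕜[X]) :
    HasDerivAt (fun y ↦ diffOpAt f y p) (diffOpAt f x (p * X)) x := by
  induction p using Polynomial.induction_on' with
  | add p q hp hq => simpa only [add_mul, map_add] using hp.fun_add hq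
  | monomial m a =>
    simpa only [Polynomial.monomial_mul_X, diffOpAt_monomial] using
      (hasDerivAt_iteratedDeriv hf (mod_cast ENat.natCast_lt_top m)).fun_const_smul a

end DifferentialOperator

theorem contDiffOn_infty_of_hasDerivAt_comp {𝕜 F : Type*} [NontriviallyNormedField 𝕜]
    [NormedAddCommGroup F] [NormedSpace 𝕜 F] {f : 𝕜 → F} {v : F → F} {s : Set 𝕜}
    (hs : IsOpen s) (hv : ContDiff 𝕜 ∞ v) (hf : ∀ x ∈ s, HasDerivAt f (v (f x)) x) :
    ContDiffOn 𝕜 ∞ f s := by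
  refine contDiffOn_infty.2 fun n ↦ ?_
  induction n with
  | zero => exact contDiffOn_zero.2 fun x hx ↦ (hf x hx).continuousAt.continuousWithinAt
  | succ n ih =>
    rw [Nat.cast_succ, contDiffOn_succ_iff_deriv_of_isOpen hs]
    refine ⟨fun x hx ↦ (hf x hx).differentiableAt.differentiableWithinAt, by simp, ?_⟩
    exact ((contDiff_infty.1 hv n).comp_contDiffOn ih).congr fun x hx ↦ (hf x hx).deriv

theorem descPochhammer_succ_comp_X_sub_one_eq_mul (R : Type*) [CommRing R] (n : ℕ) :
    (descPochhammer R (n + 1)).comp (X - 1) =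
      (descPochhammer R n).comp (X - 1) * (X - C ((n : R) + 1)) := by
  simp [descPochhammer_succ_right, Polynomial.mul_comp, sub_sub, add_comm]

section Bernoulli

variable {𝕜 A : Type*} [NontriviallyNormedField 𝕜] [NormedCommRing A] [NormedAlgebra 𝕜 A]
  {g : 𝕜 → A} {b : A} {s : Set 𝕜}

theorem diffOpAt_descPochhammer_comp_of_bernoulli (hs : IsOpen s)
    (hg : ∀ x ∈ s, HasDerivAt g (g x + b * g x ^ 2) x) (n : ℕ) {x : 𝕜} (hx : x ∈ s) :
    diffOpAt g x ((descPochhammer 𝕜 n).comp (X - 1)) =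
      n.factorial * b ^ n * g x ^ (n + 1) := by
  have hg_smooth : ContDiffOn 𝕜 ∞ g s :=
    contDiffOn_infty_of_hasDerivAt_comp (v := fun y ↦ y + b * y ^ 2) hs (by fun_prop) hg
  induction n generalizing x with
  | zero => simp [diffOpAt_one]
  | succ n ih =>
    set p := (descPochhammer 𝕜 n).comp (X - 1)
    have hpX : diffOpAt g x (p * X) =
        n.factorial * b ^ n * ((n + 1) * g x ^ n * (g x + b * g x ^ 2)) := by
      have hpow := ((hg x hx).fun_pow (n + 1)).const_mul (n.factorial * b ^ n)
      have hp := hasDerivAt_diffOpAt (hg_smooth.contDiffAt (hs.mem_nhds hx)) p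
      have hp_eq : (fun y ↦ n.factorial * b ^ n * g y ^ (n + 1)) =ᶠ[nhds x]
          fun y ↦ diffOpAt g y p :=
        Filter.eventually_of_mem (hs.mem_nhds hx) fun y hy ↦ (ih hy).symm
      simpa using (hp.congr_of_eventuallyEq hp_eq).unique hpow
    calc diffOpAt g x ((descPochhammer 𝕜 (n + 1)).comp (X - 1))
        = diffOpAt g x (p * X) - ((n : 𝕜) + 1) • diffOpAt g x p := by
          rw [descPochhammer_succ_comp_X_sub_one_eq_mul, mul_sub, map_sub, mul_comm p (C _),
            ← Polynomial.smul_eq_C_mul, map_smul]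
      _ = (n + 1).factorial * b ^ (n + 1) * g x ^ (n + 1 + 1) := by
          rw [hpX, ih hx, Algebra.smul_def, Nat.factorial_succ, map_add, map_natCast,
            map_one]
          push_cast
          ring

theorem sum_descPochhammer_coeff_smul_iteratedDeriv_of_bernoulli (hs : IsOpen s)
    (hg : ∀ x ∈ s, HasDerivAt g (g x + b * g x ^ 2) x) (n : ℕ) {x : 𝕜} (hx : x ∈ s) :
    ∑ m ∈ Icc 1 (n + 1), (descPochhammer 𝕜 (n + 1)).coeff m • iteratedDeriv (m - 1) g x =
      n.factorial * b ^ n * g x ^ (n + 1) := by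
  have hdeg : ((descPochhammer 𝕜 n).comp (X - 1)).natDegree < n + 1 := by
    rw [← Polynomial.C_1, Polynomial.natDegree_comp, descPochhammer_natDegree,
      Polynomial.natDegree_X_sub_C, mul_one]
    exact n.lt_succ_self
  rw [← diffOpAt_descPochhammer_comp_of_bernoulli hs hg n hx, diffOpAt_eq_sum_range g x hdeg,
    ← Ico_add_one_right_eq_Icc, sum_Ico_eq_sum_range]
  simp [descPochhammer_succ_left, add_comm 1]

end Bernoulli

section Exponential

variable {𝕜 : Type*} [RCLike 𝕜]

theorem hasDerivAt_one_div_one_sub_exp_neg {t : 𝕜} (ht : NormedSpace.exp (-t) ≠ 1) :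
    HasDerivAt (fun t : 𝕜 ↦ 1 / (1 - NormedSpace.exp (-t)))
      (1 / (1 - NormedSpace.exp (-t)) + -1 * (1 / (1 - NormedSpace.exp (-t))) ^ 2) t := by
  have hne : 1 - NormedSpace.exp (-t) ≠ 0 := sub_ne_zero.2 ht.symm
  have hden : HasDerivAt (fun t : 𝕜 ↦ 1 - NormedSpace.exp (-t)) (NormedSpace.exp (-t)) t := by
    simpa using ((hasDerivAt_exp (x := -t)).comp t (hasDerivAt_neg t)).const_sub 1
  simp only [one_div]
  refine (hden.fun_inv hne).congr_deriv ?_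
  field_simp
  ring

theorem isOpen_setOf_exp_neg_ne_one : IsOpen {t : 𝕜 | NormedSpace.exp (-t) ≠ 1} :=
  isOpen_ne_fun (NormedSpace.exp_continuous.comp continuous_neg) continuous_const

theorem stmt_4_general (k : ℕ) (hk : 1 ≤ k) (t : 𝕜) (ht : NormedSpace.exp (-t) ≠ 1) :
    (1 / (1 - NormedSpace.exp (-t))) ^ k =
      ((-1) ^ (k - 1) / ((k - 1).factorial : 𝕜)) *
        ∑ m ∈ Icc 1 k, (descPochhammer 𝕜 k).coeff m *
          iteratedDeriv (m - 1) (fun t : 𝕜 ↦ 1 / (1 - NormedSpace.exp (-t))) t := by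
  obtain ⟨n, rfl⟩ := Nat.exists_eq_add_of_le' hk
  simp only [← smul_eq_mul (a := (descPochhammer 𝕜 _).coeff _)]
  rw [sum_descPochhammer_coeff_smul_iteratedDeriv_of_bernoulli isOpen_setOf_exp_neg_ne_one
    (fun _ ↦ hasDerivAt_one_div_one_sub_exp_neg) n ht, Nat.add_sub_cancel]
  have hfact : (n.factorial : 𝕜) ≠ 0 := mod_cast n.factorial_ne_zero
  have hsign : (-1 : 𝕜) ^ n * (-1) ^ n = 1 := by rw [← mul_pow]; simp
  rw [← mul_assoc, ← mul_assoc, div_mul_cancel₀ _ hfact, hsign, one_mul]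

end Exponential

theorem stmt_4 (k : ℕ) (hk : 1 ≤ k) (t : ℝ) (ht : t ≠ 0) :
    (1 / (1 - Real.exp (-t))) ^ k =
      ((-1 : ℝ) ^ (k - 1) / (Nat.factorial (k - 1) : ℝ)) *
        ∑ m ∈ Finset.Icc 1 k,
          s1 k m * iteratedDeriv (m - 1) (fun t : ℝ => 1 / (1 - Real.exp (-t))) t := by
  simp only [Real.exp_eq_exp_ℝ, s1]
  exact stmt_4_general k hk t (by simpa [← Real.exp_eq_exp_ℝ] using ht)
end

section
/- For every integer k ≥ 1, the Bernoulli number B_{2k} satisfies B_{2k} = 1 + Σ_{m=1}^{2k−1} S(2k+1, m+1) S(2k, 2k−m) / C(2k, m) − (2k/(2k+1)) Σ_{m=1}^{2k} S(2k, m) S(2k+1, 2k−m+1) / C(2k, m−1). -/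
open Real Finset

/-- Stirling numbers of the second kind, real-valued, via the explicit formula
`S(k,m) = (1/m!) ∑_{ℓ=1}^m (-1)^(m-ℓ) C(m,ℓ) ℓ^k`; this gives `0` when `m > k`. -/
noncomputable def S2 (k m : ℕ) : ℝ :=
  (1 / (Nat.factorial m : ℝ)) *
    ∑ ℓ ∈ Finset.Icc 1 m, (-1 : ℝ) ^ (m - ℓ) * (Nat.choose m ℓ : ℝ) * (ℓ : ℝ) ^ k

/-! Put `u = e^t - 1`, so that `u' = 1 + u`. Repeated differentiation of `1 / u` gives
`(-1)^n (1/u)^(n) = F_n / u^(n+1)` with `F_n = ∑_{i+j=n} i! S(n+1, i+1) u^j`. On the other hand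
`1 / u = 1 / t + b`, where `b = ∑ B_{n+1} t^n / (n+1)!`; with `v = u / t` this yields
`F_n = n! v^(n+1) + (-1)^n u^(n+1) b^(n)`. As `u` is divisible by `t`, the second summand does not
contribute to the coefficient of `t^(n+1)` in `F_{n+1}`, while it contributes
`(-1)^n B_{n+1} / (n+1)` to the coefficient of `t^(n+2)` in `u F_n`. The powers of `v` cancel in
`[t^(n+1)] F_{n+1} - (n+1) [t^(n+2)] (u F_n)`, which is therefore `(-1)^(n+1) B_{n+1}`, the
Bernoulli number in the convention `B_1 = 1 / 2`. Expanding both coefficients through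
`u^m = m! ∑ S(k, m) t^k / k!` turns this combination into the two Stirling sums.
-/

open PowerSeries
open scoped Nat

section Derivation

variable {R : Type*}

/-- The numerator `∑_{i+j=n} i! S(n+1, i+1) u^j` of the `n`-th derivative of `1 / u`: if
`u' = 1 + u`, then `(1/u)^(n) = (-1)^n * invDerivNum u n / u^(n+1)`. Working with the numerator
keeps all computations inside a ring in which `u` need not be invertible. -/
def invDerivNum [CommSemiring R] (u : R) (n : ℕ) : R :=
  ∑ p ∈ antidiagonal n, (p.1 ! * Nat.stirlingSecond (n + 1) (p.1 + 1) : R) * u ^ p.2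

lemma invDerivNum_succ [CommSemiring R] (u : R) (n : ℕ) :
    invDerivNum u (n + 1) = ∑ p ∈ antidiagonal n,
      ((p.1 + 1)! * Nat.stirlingSecond (n + 1) (p.1 + 1) : R) * ((1 + u) * u ^ p.2) := by
  have hsplit : invDerivNum u (n + 1) =
      ∑ p ∈ antidiagonal (n + 1),
        ((p.1 + 1)! * Nat.stirlingSecond (n + 1) (p.1 + 1) : R) * u ^ p.2 +
      ∑ p ∈ antidiagonal (n + 1), (p.1 ! * Nat.stirlingSecond (n + 1) p.1 : R) * u ^ p.2 := by
    rw [invDerivNum, ← sum_add_distrib]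
    refine sum_congr rfl fun p _ ↦ ?_
    rw [Nat.stirlingSecond_succ_succ, Nat.factorial_succ]
    push_cast
    ring
  rw [hsplit, Nat.sum_antidiagonal_succ', Nat.sum_antidiagonal_succ,
    Nat.stirlingSecond_eq_zero_of_lt (Nat.lt_succ_self (n + 1)), Nat.stirlingSecond_succ_zero]
  simp only [Nat.cast_zero, mul_zero, zero_mul, zero_add, ← sum_add_distrib]
  exact sum_congr rfl fun p _ ↦ by ring

lemma mul_derivation_pow [CommSemiring R] {A : Type*} [CommSemiring A] [Algebra A R]
    (D : Derivation A R R) {u : R} (hu : D u = 1 + u) (j : ℕ) :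
    u * D (u ^ j) = j * ((1 + u) * u ^ j) := by
  cases j with
  | zero => simp
  | succ j =>
    rw [D.leibniz_pow, hu, Nat.add_sub_cancel, nsmul_eq_mul, smul_eq_mul]
    ring

variable [CommRing R] {A : Type*} [CommSemiring A] [Algebra A R] (D : Derivation A R R)

lemma invDerivNum_succ_eq_sub {u : R} (hu : D u = 1 + u) (n : ℕ) :
    invDerivNum u (n + 1) = (n + 1) * (1 + u) * invDerivNum u n - u * D (invDerivNum u n) := by
  rw [invDerivNum_succ, invDerivNum, map_sum, mul_sum, mul_sum, ← sum_sub_distrib]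
  refine sum_congr rfl fun p hp ↦ ?_
  have hn : (n : R) = p.1 + p.2 := by rw [← mem_antidiagonal.mp hp, Nat.cast_add]
  have hD : u * D ((p.1 ! * Nat.stirlingSecond (n + 1) (p.1 + 1) : R) * u ^ p.2) =
      (p.1 ! * Nat.stirlingSecond (n + 1) (p.1 + 1) : R) * (p.2 * ((1 + u) * u ^ p.2)) := by
    rw [← Nat.cast_mul, D.leibniz, D.map_natCast, smul_zero, add_zero, smul_eq_mul,
      mul_left_comm, mul_derivation_pow D hu]
  rw [hD, hn, Nat.factorial_succ]
  push_cast
  ring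

/-- The hypothesis `hb` says that `1 / u = 1 / x + b` for `u = x * v`. -/
lemma invDerivNum_eq_add_iterate {x v b : R} (hx : D x = 1) (hu : D (x * v) = 1 + x * v)
    (hb : v * (1 + x * b) = 1) (n : ℕ) :
    invDerivNum (x * v) n = n ! * v ^ (n + 1) + (x * v) ^ (n + 1) * ((-1) ^ n * D^[n] b) := by
  induction n with
  | zero =>
    simp only [invDerivNum, Nat.antidiagonal_zero, sum_singleton, zero_add, Nat.stirlingSecond_self,
      Nat.factorial_zero, Function.iterate_zero_apply]
    linear_combination -hb
  | succ n ih =>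
    have hxv : x * D v = 1 + x * v - v := by
      rw [D.leibniz, hx, smul_eq_mul, smul_eq_mul] at hu
      linear_combination hu
    have hv : x * v * D (v ^ (n + 1)) = (n + 1) * (1 + x * v - v) * v ^ (n + 1) := by
      rw [D.leibniz_pow, ← hxv, Nat.add_sub_cancel, nsmul_eq_mul, smul_eq_mul]
      push_cast
      ring
    have hxv_pow := mul_derivation_pow D hu (n + 1)
    have hsign : D ((-1) ^ n) = 0 := by simp [D.leibniz_pow]
    rw [invDerivNum_succ_eq_sub D hu, ih, Function.iterate_succ_apply', Nat.factorial_succ]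
    simp only [map_add, D.leibniz, D.map_natCast, hsign, smul_eq_mul]
    push_cast at hxv_pow ⊢
    linear_combination -(n ! : R) * hv - (-1) ^ n * D^[n] b * hxv_pow

end Derivation

section ExpSubOne

variable (A : Type*) [CommRing A] [Algebra ℚ A]

lemma derivative_exp_sub_one : d⁄dX A (exp A - 1) = 1 + (exp A - 1) := by
  simp [derivative_exp]

lemma factorial_mul_coeff_exp_sub_one_pow (k m : ℕ) :
    (k ! : A) * coeff k ((exp A - 1) ^ m) = m ! * Nat.stirlingSecond k m := by
  induction k generalizing m with
  | zero => cases m <;> simp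
  | succ k ih =>
    cases m with
    | zero => simp [coeff_one]
    | succ m =>
      have hderiv : d⁄dX A ((exp A - 1) ^ (m + 1)) =
          (m + 1 : ℕ) • ((exp A - 1) ^ m + (exp A - 1) ^ (m + 1)) := by
        rw [derivative_pow, derivative_exp_sub_one, Nat.add_sub_cancel, nsmul_eq_mul]
        ring
      have hcoeff : coeff (k + 1) ((exp A - 1) ^ (m + 1)) * (k + 1 : A) =
          (m + 1) * (coeff k ((exp A - 1) ^ m) + coeff k ((exp A - 1) ^ (m + 1))) := by
        rw [← coeff_derivative, hderiv, map_nsmul, nsmul_eq_mul, map_add]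
        push_cast
        rfl
      have hm := ih (m + 1)
      rw [Nat.factorial_succ] at hm
      rw [Nat.stirlingSecond_succ_succ, Nat.factorial_succ, Nat.factorial_succ]
      push_cast at hm ⊢
      linear_combination (k ! : A) * hcoeff + (m + 1 : A) * (ih m + hm)

lemma factorial_mul_coeff_exp_sub_one_pow_eq_sum (k m : ℕ) :
    (k ! : A) * coeff k ((exp A - 1) ^ m) =
      ∑ l ∈ range (m + 1), (-1) ^ (m - l) * (m.choose l : A) * (l : A) ^ k := by
  have hexp (l : ℕ) : (k ! : A) * coeff k (exp A ^ l) = (l : A) ^ k := by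
    have hk : (k ! : A) * algebraMap ℚ A (1 / k !) = 1 := by
      rw [← map_natCast (algebraMap ℚ A), ← map_mul,
        mul_one_div_cancel (Nat.cast_ne_zero.mpr k.factorial_ne_zero), map_one]
    rw [exp_pow_eq_rescale_exp, coeff_rescale, coeff_exp, mul_left_comm, hk, mul_one]
  rw [sub_eq_add_neg, add_pow, map_sum, mul_sum]
  refine sum_congr rfl fun l _ ↦ ?_
  have hC : (-1 : A⟦X⟧) ^ (m - l) * (m.choose l : A⟦X⟧) =
      C ((-1) ^ (m - l) * (m.choose l : A)) := by
    simp
  rw [mul_assoc, hC, coeff_mul_C, ← mul_assoc, hexp, mul_comm]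

end ExpSubOne

theorem S2_eq_stirlingSecond {k : ℕ} (hk : k ≠ 0) (m : ℕ) : S2 k m = Nat.stirlingSecond k m := by
  have hsum : (m ! * Nat.stirlingSecond k m : ℝ) =
      ∑ l ∈ Icc 1 m, (-1) ^ (m - l) * (m.choose l : ℝ) * (l : ℝ) ^ k := by
    rw [← factorial_mul_coeff_exp_sub_one_pow, factorial_mul_coeff_exp_sub_one_pow_eq_sum,
      range_eq_Ico, sum_eq_sum_Ico_succ_bot m.succ_pos, Nat.cast_zero, zero_pow hk, mul_zero,
      zero_add, zero_add, Nat.succ_eq_add_one, Ico_add_one_right_eq_Icc]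
  rw [S2, ← hsum, one_div, inv_mul_cancel_left₀ (Nat.cast_ne_zero.mpr m.factorial_ne_zero)]

section Bernoulli

variable (A : Type*) [CommRing A] [Algebra ℚ A]

/-- The power series `(e^X - 1) / X`, the unit by which `e^X - 1` differs from `X`. -/
noncomputable def expSubOneDivX : A⟦X⟧ :=
  PowerSeries.mk fun n ↦ coeff (n + 1) (exp A)

/-- The regular part `1 / (e^X - 1) - 1 / X = ∑ B_{n+1} X^n / (n+1)!` of `1 / (e^X - 1)`. -/
noncomputable def invExpSubOneRegular : A⟦X⟧ :=
  PowerSeries.mk fun n ↦ coeff (n + 1) (bernoulliPowerSeries A)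

lemma X_mul_expSubOneDivX : X * expSubOneDivX A = exp A - 1 := by
  rw [expSubOneDivX, ← sub_const_eq_X_mul_shift, constantCoeff_exp, map_one]

lemma constantCoeff_expSubOneDivX : constantCoeff (expSubOneDivX A) = 1 := by
  rw [← coeff_zero_eq_constantCoeff_apply, expSubOneDivX, coeff_mk, coeff_exp]
  simp

lemma one_add_X_mul_invExpSubOneRegular :
    1 + X * invExpSubOneRegular A = bernoulliPowerSeries A := by
  have h0 : constantCoeff (bernoulliPowerSeries A) = 1 := by
    simp [bernoulliPowerSeries, ← coeff_zero_eq_constantCoeff_apply]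
  rw [invExpSubOneRegular, ← sub_const_eq_X_mul_shift, h0, map_one, add_sub_cancel]

lemma expSubOneDivX_mul_bernoulliPowerSeries :
    expSubOneDivX A * bernoulliPowerSeries A = 1 := by
  apply X_mul_cancel
  rw [← mul_assoc, X_mul_expSubOneDivX, mul_comm, bernoulliPowerSeries_mul_exp_sub_one, mul_one]

lemma invDerivNum_exp_sub_one (n : ℕ) :
    invDerivNum (exp A - 1) n = n ! • expSubOneDivX A ^ (n + 1) +
      (exp A - 1) ^ (n + 1) * ((-1) ^ n * (d⁄dX A)^[n] (invExpSubOneRegular A)) := by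
  rw [← X_mul_expSubOneDivX, nsmul_eq_mul]
  refine invDerivNum_eq_add_iterate (d⁄dX A) derivative_X ?_ ?_ n
  · rw [X_mul_expSubOneDivX, derivative_exp_sub_one]
  · rw [one_add_X_mul_invExpSubOneRegular, expSubOneDivX_mul_bernoulliPowerSeries]

lemma coeff_exp_sub_one_pow_mul_self (n : ℕ) (f : A⟦X⟧) :
    coeff n ((exp A - 1) ^ n * f) = constantCoeff f := by
  rw [← X_mul_expSubOneDivX, mul_pow, mul_assoc, coeff_X_pow_mul', if_pos le_rfl, Nat.sub_self,
    coeff_zero_eq_constantCoeff_apply, map_mul, map_pow, constantCoeff_expSubOneDivX, one_pow,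
    one_mul]

lemma coeff_exp_sub_one_pow_mul_eq_zero {k n : ℕ} (h : k < n) (f : A⟦X⟧) :
    coeff k ((exp A - 1) ^ n * f) = 0 := by
  rw [← X_mul_expSubOneDivX, mul_pow, mul_assoc, coeff_X_pow_mul', if_neg h.not_ge]

lemma succ_mul_constantCoeff_iterate_derivative_invExpSubOneRegular (n : ℕ) :
    (n + 1 : A) * constantCoeff ((d⁄dX A)^[n] (invExpSubOneRegular A)) =
      algebraMap ℚ A (bernoulli (n + 1)) := by
  rw [constantCoeff_iterate_derivative, invExpSubOneRegular, coeff_mk, bernoulliPowerSeries,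
    coeff_mk, ← mul_assoc, ← Nat.cast_succ, ← Nat.cast_mul, ← Nat.factorial_succ,
    ← map_natCast (algebraMap ℚ A), ← map_mul,
    mul_div_cancel₀ _ (Nat.cast_ne_zero.mpr (n + 1).factorial_ne_zero)]

lemma coeff_invDerivNum (n : ℕ) :
    coeff n (invDerivNum (exp A - 1) n) = n ! • coeff n (expSubOneDivX A ^ (n + 1)) := by
  rw [invDerivNum_exp_sub_one, map_add, coeff_exp_sub_one_pow_mul_eq_zero A n.lt_succ_self,
    add_zero, map_nsmul]

lemma coeff_exp_sub_one_mul_invDerivNum (n : ℕ) :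
    coeff (n + 2) ((exp A - 1) * invDerivNum (exp A - 1) n) =
      n ! • coeff (n + 1) (expSubOneDivX A ^ (n + 2)) +
        (-1) ^ n * constantCoeff ((d⁄dX A)^[n] (invExpSubOneRegular A)) := by
  have hpole : coeff (n + 2) ((exp A - 1) * n ! • expSubOneDivX A ^ (n + 1)) =
      n ! • coeff (n + 1) (expSubOneDivX A ^ (n + 2)) := by
    rw [← X_mul_expSubOneDivX, mul_smul_comm, map_nsmul, mul_assoc, ← pow_succ',
      coeff_succ_X_mul]
  rw [invDerivNum_exp_sub_one, mul_add, map_add, hpole, ← mul_assoc, ← pow_succ',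
    coeff_exp_sub_one_pow_mul_self]
  simp

theorem algebraMap_bernoulli'_eq_coeff_sub_coeff (n : ℕ) :
    algebraMap ℚ A (bernoulli' (n + 1)) = coeff (n + 1) (invDerivNum (exp A - 1) (n + 1)) -
      (n + 1) * coeff (n + 2) ((exp A - 1) * invDerivNum (exp A - 1) n) := by
  have hsign : bernoulli' (n + 1) = -((-1) ^ n * bernoulli (n + 1)) := by
    rw [bernoulli'_eq_bernoulli, pow_succ]
    ring
  rw [coeff_invDerivNum, coeff_exp_sub_one_mul_invDerivNum, hsign, map_neg, map_mul,
    map_pow, map_neg, map_one, ← succ_mul_constantCoeff_iterate_derivative_invExpSubOneRegular,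
    Nat.factorial_succ, nsmul_eq_mul, nsmul_eq_mul]
  push_cast
  ring

end Bernoulli

theorem coeff_exp_sub_one_pow_mul_invDerivNum {K : Type*} [Field K] [Algebra ℚ K] (r k n : ℕ) :
    coeff k ((exp K - 1) ^ r * invDerivNum (exp K - 1) n) = (n + r)! / k ! *
      ∑ p ∈ antidiagonal n, (Nat.stirlingSecond (n + 1) (p.1 + 1) *
        Nat.stirlingSecond k (p.2 + r) / (n + r).choose p.1 : K) := by
  have : CharZero K := algebraRat.charZero K
  rw [invDerivNum, mul_sum, map_sum, mul_sum]
  refine sum_congr rfl fun p hp ↦ ?_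
  have hcoeff : coeff k ((exp K - 1) ^ (p.2 + r)) =
      ((p.2 + r)! * Nat.stirlingSecond k (p.2 + r) / k ! : K) := by
    rw [← factorial_mul_coeff_exp_sub_one_pow,
      mul_div_cancel_left₀ _ (Nat.cast_ne_zero.mpr k.factorial_ne_zero)]
  have hfactorial : ((n + r)! : K) ≠ 0 := Nat.cast_ne_zero.mpr (n + r).factorial_ne_zero
  have hchoose : ((n + r).choose p.1 : K) = (n + r)! / (p.1 ! * (p.2 + r)!) := by
    rw [← mem_antidiagonal.mp hp, add_assoc, Nat.cast_add_choose]
  have hC : (p.1 ! * Nat.stirlingSecond (n + 1) (p.1 + 1) : K⟦X⟧) =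
      C (p.1 ! * Nat.stirlingSecond (n + 1) (p.1 + 1) : K) := by
    simp
  rw [mul_left_comm, ← pow_add, add_comm r, hC, coeff_C_mul, hcoeff, hchoose]
  field_simp

lemma sum_antidiagonal_succ_eq_add_sum_Icc {M : Type*} [AddCommMonoid M] (f : ℕ → ℕ → M) (n : ℕ) :
    ∑ p ∈ antidiagonal (n + 1), f p.1 p.2 =
      f 0 (n + 1) + ∑ m ∈ Icc 1 n, f m (n + 1 - m) + f (n + 1) 0 := by
  rw [Nat.sum_antidiagonal_eq_sum_range_succ, sum_range_succ, Nat.sub_self, range_eq_Ico,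
    sum_eq_sum_Ico_succ_bot n.succ_pos, zero_add, Nat.succ_eq_add_one,
    Ico_add_one_right_eq_Icc, Nat.sub_zero]

lemma coeff_invDerivNum_eq_sum_S2 (n : ℕ) :
    coeff (n + 1) (invDerivNum (exp ℝ - 1) (n + 1)) = 1 + ∑ m ∈ Icc 1 n,
      S2 (n + 2) (m + 1) * S2 (n + 1) (n + 1 - m) / ((n + 1).choose m : ℝ) := by
  have h := coeff_exp_sub_one_pow_mul_invDerivNum (K := ℝ) 0 (n + 1) (n + 1)
  simp only [pow_zero, one_mul, add_zero] at h
  rw [h, div_self (Nat.cast_ne_zero.mpr (n + 1).factorial_ne_zero), one_mul,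
    sum_antidiagonal_succ_eq_add_sum_Icc fun i j ↦ (Nat.stirlingSecond (n + 2) (i + 1) *
      Nat.stirlingSecond (n + 1) j / (n + 1).choose i : ℝ)]
  simp [S2_eq_stirlingSecond, Nat.stirlingSecond_one_right, Nat.stirlingSecond_self]

lemma coeff_exp_sub_one_mul_invDerivNum_eq_sum_S2 (n : ℕ) :
    (n + 2) * coeff (n + 2) ((exp ℝ - 1) * invDerivNum (exp ℝ - 1) n) = ∑ m ∈ Icc 1 (n + 1),
      S2 (n + 1) m * S2 (n + 2) (n + 1 - m + 1) / ((n + 1).choose (m - 1) : ℝ) := by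
  have hfactorial : (n + 2 : ℝ) * ((n + 1)! / (n + 2)!) = 1 := by
    rw [Nat.factorial_succ (n + 1)]
    push_cast
    field_simp
    ring
  have h := coeff_exp_sub_one_pow_mul_invDerivNum (K := ℝ) 1 (n + 2) n
  rw [pow_one] at h
  rw [h, ← mul_assoc, hfactorial, one_mul,
    Nat.sum_antidiagonal_eq_sum_range_succ fun i j ↦ (Nat.stirlingSecond (n + 1) (i + 1) *
      Nat.stirlingSecond (n + 2) (j + 1) / (n + 1).choose i : ℝ),
    ← Ico_add_one_right_eq_Icc, sum_Ico_eq_sum_range]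
  refine sum_congr (by simp) fun i _ ↦ ?_
  rw [S2_eq_stirlingSecond n.succ_ne_zero, S2_eq_stirlingSecond (n + 1).succ_ne_zero, add_comm 1 i,
    Nat.add_sub_add_right, Nat.add_sub_cancel]

theorem stmt_8_general (n : ℕ) :
    ((bernoulli' n : ℚ) : ℝ) =
      1 + (∑ m ∈ Icc 1 (n - 1), S2 (n + 1) (m + 1) * S2 n (n - m) / (n.choose m : ℝ)) -
        ((n : ℝ) / (n + 1)) *
          ∑ m ∈ Icc 1 n, S2 n m * S2 (n + 1) (n - m + 1) / (n.choose (m - 1) : ℝ) := by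
  cases n with
  | zero => simp
  | succ n =>
    rw [← eq_ratCast (algebraMap ℚ ℝ), algebraMap_bernoulli'_eq_coeff_sub_coeff, Nat.add_sub_cancel,
      ← coeff_invDerivNum_eq_sum_S2, ← coeff_exp_sub_one_mul_invDerivNum_eq_sum_S2]
    push_cast
    field_simp
    ring

theorem stmt_8 (k : ℕ) (hk : 1 ≤ k) :
    ((bernoulli (2 * k) : ℚ) : ℝ) =
      1 + (∑ m ∈ Finset.Icc 1 (2 * k - 1),
            S2 (2 * k + 1) (m + 1) * S2 (2 * k) (2 * k - m) / (Nat.choose (2 * k) m : ℝ))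
        - ((2 * k : ℝ) / (2 * k + 1)) *
            ∑ m ∈ Finset.Icc 1 (2 * k),
              S2 (2 * k) m * S2 (2 * k + 1) (2 * k - m + 1) /
                (Nat.choose (2 * k) (m - 1) : ℝ) := by
  rw [bernoulli_eq_bernoulli'_of_ne_one (by lia), stmt_8_general (2 * k)]
  push_cast
  rfl
end

section
/- Let λ be a real number with λ ≠ 1 and let n ≥ 1 be an integer. Then the n-th derivative at t = 0 of the function t ↦ t/(λ e^t − 1) equals (−1)^{n−1} n Σ_{k=1}^{n} (k−1)! S(n, k)/(λ−1)^k. (Equivalently, the n-th Apostol–Bernoulli number 𝓑_n(λ), defined by t/(λ e^t − 1) = Σ_{k=0}^{∞} 𝓑_k(λ) t^k/k! near 0, is given by this formula.) -/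
open Real Finset

/-!
The function `u t = 1 / (l * exp t - 1)` solves the autonomous equation `u' = -(u + u ^ 2)`, so
every derivative of `u` is a polynomial in `u`, obtained by iterating the operator
`-(X + X ^ 2) * d/dX` on `X`. On coefficients this operator acts, up to sign, by the recurrence of
the numbers `(k - 1)! * S(n, k)`. Multiplication by `t` turns the derivative of order `n` at `0`
into `n` times the derivative of order `n - 1`.

The explicit sum for `S(n, k)` agrees with the recursive definition because `k! * S(n, k)` is the
`k`-th forward difference of `x ^ n` at `0`, and the Leibniz rule for `x * x ^ n` is the recurrence.
-/

open scoped Nat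

section ForwardDifference

variable {R : Type*} [CommRing R]

theorem fwdDiff_iter_succ_self_mul (h : R) (f : R → R) (k : ℕ) (y : R) :
    (fwdDiff h)^[k + 1] (fun x ↦ x * f x) y =
      y * (fwdDiff h)^[k + 1] f y + (k + 1) * h * (fwdDiff h)^[k] f (y + h) := by
  induction k generalizing y with
  | zero =>
    simp only [Function.iterate_succ, Function.iterate_zero, Function.comp, fwdDiff, id]
    push_cast
    ring
  | succ k ih =>
    rw [Function.iterate_succ_apply', fwdDiff, ih, ih, Function.iterate_succ_apply' _ (k + 1) f,
      fwdDiff, Function.iterate_succ_apply' _ k f, fwdDiff, fwdDiff]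
    push_cast
    ring

theorem fwdDiff_iter_pow_apply_zero (n k : ℕ) :
    (fwdDiff 1)^[k] (fun x : R ↦ x ^ n) 0 = k ! * n.stirlingSecond k := by
  induction n generalizing k with
  | zero =>
    cases k with
    | zero => simp
    | succ k =>
      rw [fwdDiff_iter_pow_eq_zero_of_lt k.succ_pos]
      simp
  | succ n ih =>
    cases k with
    | zero => simp
    | succ k =>
      have shift : (fwdDiff 1)^[k] (fun x : R ↦ x ^ n) (0 + 1) =
          (fwdDiff 1)^[k + 1] (fun x : R ↦ x ^ n) 0 + (fwdDiff 1)^[k] (fun x : R ↦ x ^ n) 0 := by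
        rw [Function.iterate_succ_apply', fwdDiff, sub_add_cancel]
      simp only [pow_succ']
      rw [fwdDiff_iter_succ_self_mul, shift, ih, ih, Nat.stirlingSecond_succ_succ,
        Nat.factorial_succ]
      push_cast
      ring

theorem factorial_mul_stirlingSecond_eq_sum (n k : ℕ) :
    (k ! * n.stirlingSecond k : R) =
      ∑ j ∈ range (k + 1), (-1) ^ (k - j) * (k.choose j : R) * (j : R) ^ n := by
  rw [← fwdDiff_iter_pow_apply_zero, fwdDiff_iter_eq_sum_shift]
  simp

end ForwardDifference

theorem S2_eq_stirlingSecond_s12 {n : ℕ} (hn : n ≠ 0) (k : ℕ) : S2 n k = n.stirlingSecond k := by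
  have sum_eq := factorial_mul_stirlingSecond_eq_sum (R := ℝ) n k
  rw [sum_range_eq_add_Ico _ k.succ_pos, Nat.cast_zero, zero_pow hn, mul_zero, zero_add,
    Nat.succ_eq_add_one, Finset.Ico_add_one_right_eq_Icc] at sum_eq
  rw [S2, ← sum_eq, one_div, inv_mul_cancel_left₀ (by positivity)]

open Polynomial Filter Topology

/-- The polynomial `∑ (k - 1)! * S(n, k) * X ^ k`, whose coefficients form the `n`-th row of
Worpitzky's triangle. -/
noncomputable def worpitzkyPoly (n : ℕ) : ℤ[X] :=
  ∑ k ∈ Icc 1 n, monomial k ((k - 1)! * n.stirlingSecond k : ℤ)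

theorem coeff_worpitzkyPoly {n : ℕ} (hn : n ≠ 0) (k : ℕ) :
    (worpitzkyPoly n).coeff k = (k - 1)! * n.stirlingSecond k := by
  simp only [worpitzkyPoly, finsetSum_coeff, coeff_monomial, sum_ite_eq', mem_Icc]
  split_ifs with hk
  · rfl
  · obtain rfl | hnk : k = 0 ∨ n < k := by lia
    · obtain ⟨m, rfl⟩ := Nat.exists_eq_succ_of_ne_zero hn
      simp
    · simp [Nat.stirlingSecond_eq_zero_of_lt hnk]

theorem worpitzkyPoly_one : worpitzkyPoly 1 = X := by
  simp [worpitzkyPoly, Nat.stirlingSecond_self, X]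

theorem worpitzkyPoly_succ {n : ℕ} (hn : n ≠ 0) :
    worpitzkyPoly (n + 1) = (X + X ^ 2) * derivative (worpitzkyPoly n) := by
  obtain ⟨m, rfl⟩ := Nat.exists_eq_succ_of_ne_zero hn
  rw [add_mul, sq, mul_assoc]
  ext (_ | _ | k)
  · simp [coeff_worpitzkyPoly]
  · simp [coeff_worpitzkyPoly, coeff_derivative, Nat.stirlingSecond_succ_succ _ 0]
  · simp only [coeff_worpitzkyPoly (Nat.succ_ne_zero _), coeff_add, coeff_X_mul, coeff_derivative,
      Nat.stirlingSecond_succ_succ (m + 1), Nat.add_sub_cancel, Nat.factorial_succ]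
    push_cast
    ring

theorem iterate_neg_X_add_sq_mul_derivative_X (n : ℕ) :
    (fun q ↦ -(X + X ^ 2) * derivative q)^[n] X = (-1) ^ n * worpitzkyPoly (n + 1) := by
  induction n with
  | zero => simp [worpitzkyPoly_one]
  | succ n ih =>
    rw [Function.iterate_succ_apply', ih, worpitzkyPoly_succ n.succ_ne_zero]
    have derivative_neg_one_pow : derivative ((-1) ^ n : ℤ[X]) = 0 := by
      rw [← C_1, ← C_neg, ← C_pow, derivative_C]
    rw [derivative_mul, derivative_neg_one_pow]
    ring

theorem aeval_worpitzkyPoly {A : Type*} [Ring A] (n : ℕ) (x : A) :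
    aeval x (worpitzkyPoly n) =
      ∑ k ∈ Icc 1 n, (k - 1)! * (n.stirlingSecond k : A) * x ^ k := by
  simp [worpitzkyPoly, aeval_monomial]

section IteratedDeriv

variable {𝕜 : Type*} [NontriviallyNormedField 𝕜]

theorem iteratedDeriv_eq_aeval_of_hasDerivAt {R : Type*} [CommSemiring R] [Algebra R 𝕜]
    {p : R[X]} {f : 𝕜 → 𝕜} {x : 𝕜} (hf : ∀ᶠ y in 𝓝 x, HasDerivAt f (aeval (f y) p) y) (n : ℕ) :
    iteratedDeriv n f x = aeval (f x) ((fun q ↦ p * derivative q)^[n] X) := by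
  induction n generalizing x with
  | zero => simp
  | succ n ih =>
    have ih_near : iteratedDeriv n f =ᶠ[𝓝 x]
        fun y ↦ aeval (f y) ((fun q ↦ p * derivative q)^[n] X) :=
      hf.eventually_nhds.mono fun _ ↦ ih
    rw [iteratedDeriv_succ, ih_near.deriv_eq, Function.iterate_succ_apply', map_mul, mul_comm]
    exact ((Polynomial.hasDerivAt_aeval _ (f x)).comp x hf.self_of_nhds).deriv

theorem iteratedDeriv_self_mul_zero {n : ℕ} {f : 𝕜 → 𝕜} (hf : ContDiffAt 𝕜 n f 0) :
    iteratedDeriv n (fun t ↦ t * f t) 0 = n * iteratedDeriv (n - 1) f 0 := by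
  rw [iteratedDeriv_fun_mul contDiffAt_fun_id hf]
  cases n <;> simp [iteratedDeriv_fun_id_zero]

end IteratedDeriv

section InvMulExpSubOne

variable {𝕜 : Type*} [RCLike 𝕜] {l t : 𝕜}

theorem hasDerivAt_inv_mul_exp_sub_one (ht : l * NormedSpace.exp t - 1 ≠ 0) :
    HasDerivAt (fun s ↦ (l * NormedSpace.exp s - 1)⁻¹)
      (-((l * NormedSpace.exp t - 1)⁻¹ + (l * NormedSpace.exp t - 1)⁻¹ ^ 2)) t := by
  refine (((hasDerivAt_exp.const_mul l).sub_const 1).fun_inv ht).congr_deriv ?_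
  field_simp
  ring

theorem contDiffAt_inv_mul_exp_sub_one (ht : l * NormedSpace.exp t - 1 ≠ 0) {n : ℕ} :
    ContDiffAt 𝕜 n (fun s ↦ (l * NormedSpace.exp s - 1)⁻¹) t :=
  ((contDiffAt_const.mul (NormedSpace.exp_analytic t).contDiffAt).sub contDiffAt_const).inv ht

theorem iteratedDeriv_inv_mul_exp_sub_one (ht : l * NormedSpace.exp t - 1 ≠ 0) (n : ℕ) :
    iteratedDeriv n (fun s ↦ (l * NormedSpace.exp s - 1)⁻¹) t =
      (-1) ^ n * ∑ k ∈ Icc 1 (n + 1),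
        (k - 1)! * ((n + 1).stirlingSecond k : 𝕜) * (l * NormedSpace.exp t - 1)⁻¹ ^ k := by
  have riccati : ∀ᶠ y in 𝓝 t, HasDerivAt (fun s ↦ (l * NormedSpace.exp s - 1)⁻¹)
      (aeval (l * NormedSpace.exp y - 1)⁻¹ (-(X + X ^ 2) : ℤ[X])) y := by
    have ne_zero_near : ∀ᶠ y in 𝓝 t, l * NormedSpace.exp y - 1 ≠ 0 :=
      ((hasDerivAt_exp.const_mul l).sub_const 1).continuousAt.eventually_ne ht
    filter_upwards [ne_zero_near] with y hy
    simpa using hasDerivAt_inv_mul_exp_sub_one hy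
  rw [iteratedDeriv_eq_aeval_of_hasDerivAt riccati, iterate_neg_X_add_sq_mul_derivative_X, map_mul,
    aeval_worpitzkyPoly, map_pow, map_neg, map_one]

end InvMulExpSubOne

theorem stmt_12_general {𝕜 : Type*} [RCLike 𝕜] {l : 𝕜} (hl : l ≠ 1) (n : ℕ) :
    iteratedDeriv n (fun t : 𝕜 ↦ t / (l * NormedSpace.exp t - 1)) 0 =
      (-1) ^ (n - 1) * n *
        ∑ k ∈ Icc 1 n, (k - 1)! * (n.stirlingSecond k : 𝕜) / (l - 1) ^ k := by
  have denom_ne_zero : l * NormedSpace.exp 0 - 1 ≠ 0 := by simpa [sub_eq_zero] using hl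
  simp only [div_eq_mul_inv]
  rw [iteratedDeriv_self_mul_zero (contDiffAt_inv_mul_exp_sub_one denom_ne_zero)]
  cases n with
  | zero => simp
  | succ n =>
    rw [Nat.add_sub_cancel, iteratedDeriv_inv_mul_exp_sub_one denom_ne_zero, NormedSpace.exp_zero,
      mul_one]
    simp only [inv_pow]
    ring

theorem stmt_12 (l : ℝ) (hl : l ≠ 1) (n : ℕ) (hn : 1 ≤ n) :
    iteratedDeriv n (fun t : ℝ => t / (l * Real.exp t - 1)) 0 =
      (-1 : ℝ) ^ (n - 1) * (n : ℝ) *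
        ∑ k ∈ Finset.Icc 1 n, (Nat.factorial (k - 1) : ℝ) * S2 n k / (l - 1) ^ k := by
  simpa only [S2_eq_stirlingSecond_s12 (Nat.one_le_iff_ne_zero.mp hn), Real.exp_eq_exp_ℝ] using
    stmt_12_general hl n
end
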